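/- Let p, q ∈ 𝒫 satisfy: n_p = n_q; a_p ∩ (n_p × (s_p ∩ s_q)) = a_q ∩ (n_p × (s_p ∩ s_q)); b_p ∩ (n_p × (s_p ∩ s_q)) = b_q ∩ (n_p × (s_p ∩ s_q)); and c_p^z = c_q^z for every z ∈ Z_p ∩ Z_q. Then p and q are compatible in 𝒫, i.e., they have a common lower bound. -/

import Mathlib

open Cardinal Set

/-- A condition `p = ⟨n_p, s_p, a_p, b_p, Z_p, ⟨c_p^z : z ∈ Z_p⟩⟩` of the partial
order `𝒫`. -/
structure PCond (θ : Cardinal.{0}) where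
  /-- `n_p ∈ ω` -/
  n : ℕ
  /-- `s_p`, a finite subset of `θ` -/
  s : Set Ordinal.{0}
  /-- `a_p ⊆ n_p × s_p` -/
  a : Set (ℕ × Ordinal.{0})
  /-- `b_p ⊆ n_p × s_p` -/
  b : Set (ℕ × Ordinal.{0})
  /-- `Z_p`, a finite set of subsets of `θ`, each of cardinality `≤ ℵ₁` -/
  Z : Set (Set Ordinal.{0})
  /-- `⟨c_p^z : z ∈ Z_p⟩` with `c_p^z ⊆ n_p` -/
  c : Set Ordinal.{0} → Set ℕ
  s_fin : s.Finite
  s_sub : s ⊆ Set.Iio θ.ord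
  a_sub : a ⊆ Set.Iio n ×ˢ s
  b_sub : b ⊆ Set.Iio n ×ˢ s
  ab_disj : a ∩ b = ∅
  Z_fin : Z.Finite
  Z_sub : ∀ z ∈ Z, z ⊆ Set.Iio θ.ord ∧ #z ≤ Cardinal.aleph 1
  c_sub : ∀ z ∈ Z, c z ⊆ Set.Iio n

/-- The ordering of `𝒫`:  `q ≤ p` iff conditions (1)–(5) hold. -/
def PLe (θ : Cardinal.{0}) (q p : PCond θ) : Prop :=
  (p.s ⊆ q.s ∧ p.n ≤ q.n ∧ p.Z ⊆ q.Z) ∧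
  (q.a ∩ Set.Iio p.n ×ˢ p.s = p.a ∧ q.b ∩ Set.Iio p.n ×ˢ p.s = p.b) ∧
  (∀ z ∈ p.Z, q.c z ∩ Set.Iio p.n = p.c z) ∧
  (∀ ξ ∈ p.s, ∀ η ∈ p.s, ∀ l : ℕ, p.n ≤ l → l < q.n →
    (l, ξ) ∈ q.a → (l, η) ∉ q.b) ∧
  (∀ z ∈ p.Z, ∀ ξ ∈ z ∩ p.s, ∀ l : ℕ, p.n ≤ l → l < q.n →
    ((l, ξ) ∈ q.a → l ∈ q.c z) ∧ ((l, ξ) ∈ q.b → l ∉ q.c z))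

/-! The lower bound `r` is the coordinatewise union of `p` and `q`, with the same `n`. Clauses (4)
and (5) of the order only concern levels at which `n` grows, so they hold vacuously. Since `p` and
`q` agree on the overlap of their domains, each coordinate of the union restricts to the given
coordinates. This gives clauses (2) and (3), and also disjointness: a common point of `a_p ∪ a_q`
and `b_p ∪ b_q` would be a common point of `a_p` and `b_p` or of `a_q` and `b_q`. -/

section Amalgamation

variable {α : Type*} {A A' B B' X Y : Set α}

theorem union_inter_eq_left_of_inter_eq (hA : A ⊆ X) (hA' : A' ⊆ Y)
    (h : A ∩ (X ∩ Y) = A' ∩ (X ∩ Y)) : (A ∪ A') ∩ X = A := by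
  have hA'X : A' ∩ X ⊆ A := fun x ⟨hxA', hxX⟩ ↦
    inter_subset_left (h.superset ⟨hxA', hxX, hA' hxA'⟩)
  rw [union_inter_distrib_right, inter_eq_left.2 hA, union_eq_left.2 hA'X]

theorem union_inter_eq_right_of_inter_eq (hA : A ⊆ X) (hA' : A' ⊆ Y)
    (h : A ∩ (X ∩ Y) = A' ∩ (X ∩ Y)) : (A ∪ A') ∩ Y = A' := by
  rw [union_comm]
  exact union_inter_eq_left_of_inter_eq hA' hA (by rw [inter_comm Y, h])

theorem union_inter_union_eq_empty_of_inter_eq (hA : A ⊆ X) (hB : B ⊆ X) (hA' : A' ⊆ Y)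
    (hB' : B' ⊆ Y) (hAB : A ∩ B = ∅) (hAB' : A' ∩ B' = ∅)
    (ha : A ∩ (X ∩ Y) = A' ∩ (X ∩ Y)) (hb : B ∩ (X ∩ Y) = B' ∩ (X ∩ Y)) :
    (A ∪ A') ∩ (B ∪ B') = ∅ := by
  have hX : (A ∪ A') ∩ (B ∪ B') ∩ X = ∅ := by
    rw [inter_inter_distrib_right, union_inter_eq_left_of_inter_eq hA hA' ha,
      union_inter_eq_left_of_inter_eq hB hB' hb, hAB]
  have hY : (A ∪ A') ∩ (B ∪ B') ∩ Y = ∅ := by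
    rw [inter_inter_distrib_right, union_inter_eq_right_of_inter_eq hA hA' ha,
      union_inter_eq_right_of_inter_eq hB hB' hb, hAB']
  have hXY : (A ∪ A') ∩ (B ∪ B') ⊆ X ∪ Y := inter_subset_left.trans (union_subset_union hA hA')
  rw [← inter_eq_left.2 hXY, inter_union_distrib_left, hX, hY, union_empty]

end Amalgamation

namespace PCond

variable {θ : Cardinal.{0}} {p q r : PCond θ}

/-- The rectangle `n_p × s_p` containing `a_p` and `b_p`. -/
def box (p : PCond θ) : Set (ℕ × Ordinal.{0}) := Iio p.n ×ˢ p.s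

theorem box_inter_box (hn : p.n = q.n) : p.box ∩ q.box = Iio p.n ×ˢ (p.s ∩ q.s) := by
  rw [box, box, ← hn, prod_inter]

theorem box_union_box (hn : p.n = q.n) : p.box ∪ q.box = Iio p.n ×ˢ (p.s ∪ q.s) := by
  rw [box, box, ← hn, prod_union]

theorem ple_of_n_eq (hn : p.n = r.n) (hs : p.s ⊆ r.s) (hZ : p.Z ⊆ r.Z)
    (ha : r.a ∩ p.box = p.a) (hb : r.b ∩ p.box = p.b) (hc : ∀ z ∈ p.Z, r.c z = p.c z) :
    PLe θ r p :=
  ⟨⟨hs, hn.le, hZ⟩, ⟨ha, hb⟩,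
    fun z hz ↦ by rw [hc z hz, inter_eq_left.2 (p.c_sub z hz)],
    fun _ _ _ _ _ hpl hlr ↦ absurd hlr (hn ▸ hpl).not_gt,
    fun _ _ _ _ _ hpl hlr ↦ absurd hlr (hn ▸ hpl).not_gt⟩

/-- Two conditions agree if they have the same `n` and the rest of their data coincides wherever
both are defined: `a` and `b` on the common part of the boxes, `c` on the common indices. This is
the hypothesis under which their coordinatewise union is a condition extending both. -/
structure Agree (p q : PCond θ) : Prop where
  n_eq : p.n = q.n
  a_eq : p.a ∩ (p.box ∩ q.box) = q.a ∩ (p.box ∩ q.box)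
  b_eq : p.b ∩ (p.box ∩ q.box) = q.b ∩ (p.box ∩ q.box)
  c_eq : ∀ z ∈ p.Z ∩ q.Z, p.c z = q.c z

theorem Agree.symm (h : p.Agree q) : q.Agree p where
  n_eq := h.n_eq.symm
  a_eq := by rw [inter_comm q.box, h.a_eq]
  b_eq := by rw [inter_comm q.box, h.b_eq]
  c_eq z hz := (h.c_eq z hz.symm).symm

/-- The coordinatewise union of two conditions that agree. As `c` is a total function whose values
outside `Z` carry no information, the union at `z` takes only those of `p.c z` and `q.c z` for
which `z` is an index. -/
def amalgam (h : p.Agree q) : PCond θ where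
  n := p.n
  s := p.s ∪ q.s
  a := p.a ∪ q.a
  b := p.b ∪ q.b
  Z := p.Z ∪ q.Z
  c z := {l | z ∈ p.Z ∧ l ∈ p.c z} ∪ {l | z ∈ q.Z ∧ l ∈ q.c z}
  s_fin := p.s_fin.union q.s_fin
  s_sub := union_subset p.s_sub q.s_sub
  a_sub := box_union_box h.n_eq ▸ union_subset_union p.a_sub q.a_sub
  b_sub := box_union_box h.n_eq ▸ union_subset_union p.b_sub q.b_sub
  ab_disj := union_inter_union_eq_empty_of_inter_eq p.a_sub p.b_sub q.a_sub q.b_sub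
    p.ab_disj q.ab_disj h.a_eq h.b_eq
  Z_fin := p.Z_fin.union q.Z_fin
  Z_sub z hz := hz.elim (p.Z_sub z) (q.Z_sub z)
  c_sub _ _ := union_subset (fun _ ⟨hz, hl⟩ ↦ p.c_sub _ hz hl)
    (fun _ ⟨hz, hl⟩ ↦ h.n_eq ▸ q.c_sub _ hz hl)

theorem amalgam_comm (h : p.Agree q) : amalgam h = amalgam h.symm := by
  simp only [amalgam, h.n_eq, union_comm]

theorem amalgam_c_of_mem_left (h : p.Agree q) {z : Set Ordinal.{0}} (hz : z ∈ p.Z) :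
    (amalgam h).c z = p.c z := by
  ext l
  refine ⟨?_, fun hl ↦ .inl ⟨hz, hl⟩⟩
  rintro (⟨-, hl⟩ | ⟨hzq, hl⟩)
  · exact hl
  · rwa [h.c_eq z ⟨hz, hzq⟩]

theorem amalgam_ple_left (h : p.Agree q) : PLe θ (amalgam h) p :=
  ple_of_n_eq rfl subset_union_left subset_union_left
    (union_inter_eq_left_of_inter_eq p.a_sub q.a_sub h.a_eq)
    (union_inter_eq_left_of_inter_eq p.b_sub q.b_sub h.b_eq)
    (fun _ ↦ amalgam_c_of_mem_left h)

theorem amalgam_ple_right (h : p.Agree q) : PLe θ (amalgam h) q :=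
  amalgam_comm h ▸ amalgam_ple_left h.symm

end PCond

theorem statement12_general (θ : Cardinal.{0}) (p q : PCond θ) (hn : p.n = q.n)
    (ha : p.a ∩ Set.Iio p.n ×ˢ (p.s ∩ q.s) = q.a ∩ Set.Iio p.n ×ˢ (p.s ∩ q.s))
    (hb : p.b ∩ Set.Iio p.n ×ˢ (p.s ∩ q.s) = q.b ∩ Set.Iio p.n ×ˢ (p.s ∩ q.s))
    (hc : ∀ z ∈ p.Z ∩ q.Z, p.c z = q.c z) :
    ∃ r : PCond θ, PLe θ r p ∧ PLe θ r q := by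
  rw [← PCond.box_inter_box hn] at ha hb
  have hpq : p.Agree q := ⟨hn, ha, hb, hc⟩
  exact ⟨.amalgam hpq, PCond.amalgam_ple_left hpq, PCond.amalgam_ple_right hpq⟩

/-- two conditions of `𝒫` with the same `n` which agree (below `n`)
on the common part of their `s`'s and whose `c`'s agree on the common part of
their `Z`'s are compatible. -/
theorem statement12 (θ : Cardinal.{0}) (hθ : ℵ₀ < θ) (p q : PCond θ)
    (hn : p.n = q.n)
    (ha : p.a ∩ Set.Iio p.n ×ˢ (p.s ∩ q.s) = q.a ∩ Set.Iio p.n ×ˢ (p.s ∩ q.s))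
    (hb : p.b ∩ Set.Iio p.n ×ˢ (p.s ∩ q.s) = q.b ∩ Set.Iio p.n ×ˢ (p.s ∩ q.s))
    (hc : ∀ z ∈ p.Z ∩ q.Z, p.c z = q.c z) :
    ∃ r : PCond θ, PLe θ r p ∧ PLe θ r q :=
  statement12_general θ p q hn ha hb hc
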